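/- For every i ∈ {1,…,n} and every policy π visited by Bland(𝔅_n, π_0, 𝒩_{𝔅_n}): if the algorithm applies the improving switch skip(i) to π, then z_π(skip(i)) > z_π(board(i)); and if it applies the improving switch enter(i) to π, then z_π(enter(i)) > z_π(skip(i)) and z_π(enter(i)) > z_π(board(i)). -/

import Mathlib

/-! ## The Markov decision process `𝔅_n` -/

/-- Vertices of the MDP `𝔅_n`: a transportation vertex `t`, a sink `s`, a dummy vertex `d`,
and vertices `a i`, `b i` for `i ∈ {1,…,n}`. -/
inductive BV : Type where
  | t : BV
  | s : BV
  | d : BV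
  | a : ℕ → BV
  | b : ℕ → BV
deriving DecidableEq

/-- The vertex `a i` for `i ∈ {1,…,n+1}`, with the convention `a (n+1) = s`. -/
def aN (n i : ℕ) : BV := if i = n + 1 then BV.s else BV.a i

/-- The vertex `b i` for `i ∈ {1,…,n+1}`, with the convention `b (n+1) = d`. -/
def bN (n i : ℕ) : BV := if i = n + 1 then BV.d else BV.b i

/-- The vertex set of `𝔅_n`. -/
def IsBVertex (n : ℕ) : BV → Prop
  | BV.t => True
  | BV.s => True
  | BV.d => True
  | BV.a i => 1 ≤ i ∧ i ≤ n
  | BV.b i => 1 ≤ i ∧ i ≤ n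

/-- The edge relation of `𝔅_n`: travel, enter, skip, board, stay, leave edges,
the edge `(d,s)` and the self-loop `(s,s)`. -/
def BEdge (n : ℕ) (u v : BV) : Prop :=
  (∃ i, 1 ≤ i ∧ i ≤ n ∧ u = BV.t ∧ v = BV.a i) ∨
  (∃ i, 1 ≤ i ∧ i ≤ n ∧ u = BV.a i ∧ v = BV.b i) ∨
  (∃ i, 1 ≤ i ∧ i ≤ n ∧ u = BV.a i ∧ v = aN n (i + 1)) ∨
  (∃ i, 1 ≤ i ∧ i ≤ n ∧ u = BV.a i ∧ v = BV.t) ∨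
  (∃ i, 1 ≤ i ∧ i ≤ n ∧ u = BV.b i ∧ v = bN n (i + 1)) ∨
  (∃ i, 1 ≤ i ∧ i ≤ n ∧ u = BV.b i ∧ v = aN n (i + 1)) ∨
  (u = BV.d ∧ v = BV.s) ∨ (u = BV.s ∧ v = BV.s)

/-- The reward function of `𝔅_n`: `r(enter i) = 2^i`, `r(stay i) = 3/4`,
`r(board i) = -2^i + 5/4`, and reward `0` on all other edges. -/
def rB (n : ℕ) (u v : BV) : ℚ :=
  match u, v with
  | BV.a i, BV.b j => if i = j then 2 ^ i else 0
  | BV.a i, BV.t => -(2 ^ i) + 5 / 4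
  | BV.b i, BV.b j => if j = i + 1 then 3 / 4 else 0
  | BV.b i, BV.d => if i = n then 3 / 4 else 0
  | _, _ => 0

/-- A policy for `𝔅_n` chooses an outgoing edge at every vertex. -/
def IsBPolicy (n : ℕ) (π : BV → BV) : Prop := ∀ u, IsBVertex n u → BEdge n u (π u)

/-- A policy is weak unichain if it reaches the sink `s` from every vertex. -/
def BWeakUnichain (n : ℕ) (π : BV → BV) : Prop :=
  ∀ u, IsBVertex n u → ∃ k, π^[k] u = BV.s

open Classical in
/-- The value of a vertex `v` w.r.t. a (weak unichain) policy `π`: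
the sum of the rewards along the path that `π` takes from `v` to the sink `s`. -/
noncomputable def BVal (n : ℕ) (π : BV → BV) (v : BV) : ℚ :=
  if h : ∃ k, π^[k] v = BV.s then
    ∑ i ∈ Finset.range (Nat.find h), rB n (π^[i] v) (π^[i + 1] v)
  else 0

/-- The reduced costs of the edge `(u,v)` w.r.t. the policy `π`. -/
noncomputable def zB (n : ℕ) (π : BV → BV) (u v : BV) : ℚ :=
  rB n u v + BVal n π v - BVal n π u

/-- The edge `(u,v)` is an improving switch for `π` if its reduced costs are positive. -/
def BImproving (n : ℕ) (π : BV → BV) (u v : BV) : Prop :=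
  BEdge n u v ∧ 0 < zB n π u v

/-- The Bland numbering `𝒩_{𝔅_n}` of the edges of `𝔅_n`. -/
def NB (n : ℕ) (u v : BV) : ℕ :=
  match u, v with
  | BV.t, BV.a i => i
  | BV.a i, BV.b _ => n + 1 + 5 * (i - 1)
  | BV.a i, BV.a _ => n + 2 + 5 * (i - 1)
  | BV.a i, BV.s => n + 2 + 5 * (i - 1)
  | BV.a i, BV.t => n + 3 + 5 * (i - 1)
  | BV.b i, BV.b _ => n + 4 + 5 * (i - 1)
  | BV.b i, BV.d => n + 4 + 5 * (i - 1)
  | BV.b i, BV.a _ => n + 5 + 5 * (i - 1)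
  | BV.b i, BV.s => n + 5 + 5 * (i - 1)
  | BV.d, BV.s => 6 * n + 1
  | BV.s, BV.s => 6 * n + 2
  | _, _ => 0

/-- One step of Bland's policy iteration with edge numbering `N`:
apply the improving switch with the smallest number. -/
def IsBlandStep (n : ℕ) (N : BV → BV → ℕ) (π π' : BV → BV) : Prop :=
  ∃ u v, BImproving n π u v ∧ (∀ u' v', BImproving n π u' v' → N u v ≤ N u' v') ∧
    π' = Function.update π u v

/-- `BlandReaches n N π ψ` says that Bland's policy iteration started at `π` visits `ψ`. -/
def BlandReaches (n : ℕ) (N : BV → BV → ℕ) : (BV → BV) → (BV → BV) → Prop :=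
  Relation.ReflTransGen (IsBlandStep n N)

/-- The canonical policy `π_0` for `0`: `travel 1`, `skip i` and `leave i` are active. -/
def pi0 (n : ℕ) : BV → BV := fun u =>
  match u with
  | BV.t => BV.a 1
  | BV.a i => aN n (i + 1)
  | BV.b i => aN n (i + 1)
  | BV.d => BV.s
  | BV.s => BV.s

/-- The optimal policy `π_*`: `travel 1`, `enter i` for all `i`, `leave j` for `j < n`,
and `stay n` are active. -/
def piStar (n : ℕ) : BV → BV := fun u =>
  match u with
  | BV.t => BV.a 1
  | BV.a i => BV.b i
  | BV.b i => if i = n then BV.d else BV.a (i + 1)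
  | BV.d => BV.s
  | BV.s => BV.s

/-! ## Bits and canonical policies -/

/-- The least significant set bit `ℓ_1(x)` (1-based). -/
noncomputable def lsb (x : ℕ) : ℕ := sInf {i | 1 ≤ i ∧ Nat.testBit x (i - 1)}

/-- The most significant set bit `m(x)` (1-based). -/
noncomputable def msb1 (x : ℕ) : ℕ := sSup {i | 1 ≤ i ∧ Nat.testBit x (i - 1)}

/-- The least unset bit `ℓ_0(x)` (1-based). -/
noncomputable def lzero (x : ℕ) : ℕ := sInf {i | 1 ≤ i ∧ ¬ Nat.testBit x (i - 1)}

/-- `L_i(x) = max { j ≤ i-2 | x_j = 1 or j = 1 }` (1-based bits). -/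
noncomputable def Lfun (i x : ℕ) : ℕ :=
  sSup {j | 1 ≤ j ∧ j ≤ i - 2 ∧ (Nat.testBit x (j - 1) ∨ j = 1)}

/-- `IsCanonical n x π` says that `π` is the canonical policy `π_x` for `x`. -/
noncomputable def IsCanonical (n x : ℕ) (π : BV → BV) : Prop :=
  IsBPolicy n π ∧
  if x = 0 then
    π BV.t = BV.a 1 ∧
      ∀ i, 1 ≤ i → i ≤ n → π (BV.a i) = aN n (i + 1) ∧ π (BV.b i) = aN n (i + 1)
  else
    π BV.t = BV.a (lsb x) ∧
    π (BV.b (msb1 x)) = aN n (msb1 x + 1) ∧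
    (∀ i, msb1 x < i → i ≤ n → π (BV.a i) = aN n (i + 1) ∧ π (BV.b i) = aN n (i + 1)) ∧
    ∀ i, 1 ≤ i → i ≤ n → Nat.testBit x (i - 1) →
      π (BV.a i) = BV.b i ∧
      (i = 2 → π (BV.b 1) = BV.a 2 ∧ (¬ Nat.testBit x 0 → π (BV.a 1) = BV.a 2)) ∧
      (3 ≤ i → Nat.testBit x (i - 2) → π (BV.b (i - 1)) = BV.a i) ∧
      (3 ≤ i → ¬ Nat.testBit x (i - 2) →
        π (BV.b (i - 1)) = BV.b i ∧ π (BV.a (i - 1)) = BV.a i ∧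
        π (BV.b (i - 2)) = BV.a (i - 1) ∧
        (Lfun i x < i - 2 →
          ∀ j, Lfun i x + 1 ≤ j → j ≤ i - 2 →
            π (BV.a j) = BV.t ∧ π (BV.b (j - 1)) = BV.b j) ∧
        (Lfun i x = 1 → ¬ Nat.testBit x 0 → π (BV.a 1) = BV.t))

/-- Activating a list of edges in a policy, from left to right. -/
def activateList (π : BV → BV) (L : List (BV × BV)) : BV → BV :=
  L.foldl (fun σ e => Function.update σ e.1 e.2) π

/-- The canonical phases w.r.t. an odd number `x` (with `ℓ := ℓ_0(x)`), as a list of edges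
to be activated in order. -/
noncomputable def phaseList (n x : ℕ) : List (BV × BV) :=
  let ℓ := lzero x
  (if Nat.testBit x ℓ then [(BV.b ℓ, aN n (ℓ + 1))] else []) ++
  (if Nat.testBit x ℓ ∨ msb1 x < ℓ then [(BV.b (ℓ - 1), BV.b ℓ)] else []) ++
  [(BV.a ℓ, BV.b ℓ), (BV.t, BV.a ℓ)] ++
  ((List.range (ℓ - 2)).map fun j => (BV.a (j + 1), BV.t)) ++
  [(BV.a (ℓ - 1), BV.a ℓ)] ++
  (((List.range (ℓ - 3)).reverse).map fun j => (BV.b (j + 1), BV.b (j + 2))) ++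
  (if ℓ = 2 then [(BV.b 1, BV.a 2)] else [])

/-! ## The Markov decision process `𝔇_n` -/

/-- Vertices of `𝔇_n`: the original vertices (`base`), and for every edge `(v,w)` of `𝔅_n`
other than the self-loop, the gadget vertices `x v w`, `y v w`, `z v w`. -/
inductive DV : Type where
  | base : BV → DV
  | x : BV → BV → DV
  | y : BV → BV → DV
  | z : BV → BV → DV
deriving DecidableEq

/-- The edges of `𝔅_n` that get replaced by gadgets (all edges except the self-loop `(s,s)`). -/
def DEdgePair (n : ℕ) (v w : BV) : Prop := BEdge n v w ∧ v ≠ BV.s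

/-- The vertex set of `𝔇_n`. -/
def IsDVertex (n : ℕ) : DV → Prop
  | DV.base v => IsBVertex n v
  | DV.x v w => DEdgePair n v w
  | DV.y v w => DEdgePair n v w
  | DV.z v w => DEdgePair n v w

/-- The agent vertices of `𝔇_n` (all vertices except the randomization vertices `y v w`). -/
def IsDAgent (n : ℕ) : DV → Prop
  | DV.base v => IsBVertex n v
  | DV.x v w => DEdgePair n v w
  | DV.y _ _ => False
  | DV.z v w => DEdgePair n v w

/-- The agent edges of `𝔇_n`. -/
def DEdge (n : ℕ) (u u' : DV) : Prop :=
  (∃ v w, DEdgePair n v w ∧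
    ((u = DV.base v ∧ u' = DV.x v w) ∨ (u = DV.x v w ∧ u' = DV.base v) ∨
     (u = DV.x v w ∧ u' = DV.y v w) ∨ (u = DV.z v w ∧ u' = DV.base w))) ∨
  (u = DV.base BV.s ∧ u' = DV.base BV.s)

/-- The reward function of `𝔇_n`: the edge `(z v w, w)` carries the reward of the original
edge `(v,w)`; all other agent edges have reward `0`. -/
def rD (n : ℕ) (u u' : DV) : ℚ :=
  match u, u' with
  | DV.z v w, DV.base w' => if w' = w then rB n v w else 0
  | _, _ => 0

/-- A policy for `𝔇_n` chooses an outgoing agent edge at every agent vertex. -/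
def IsDPolicy (n : ℕ) (π : DV → DV) : Prop := ∀ u, IsDAgent n u → DEdge n u (π u)

/-- `IsDVal n p π V` says that `V` satisfies the Bellman equations characterizing the value
function of the policy `π` for `𝔇_n` with probabilities `p`, with `V s = 0`. -/
def IsDVal (n : ℕ) (p : BV → ℚ) (π : DV → DV) (V : DV → ℚ) : Prop :=
  V (DV.base BV.s) = 0 ∧
  (∀ u, IsDAgent n u → V u = rD n u (π u) + V (π u)) ∧
  (∀ v w, DEdgePair n v w →
    V (DV.y v w) = p v * V (DV.z v w) + (1 - p v) * V (DV.base v))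

open Classical in
/-- The value function of a (weak unichain) policy `π` for `𝔇_n`: the unique solution of the
Bellman equations (normalized to `0` outside the vertex set). -/
noncomputable def DVal (n : ℕ) (p : BV → ℚ) (π : DV → DV) : DV → ℚ :=
  if h : ∃! V : DV → ℚ, IsDVal n p π V ∧ ∀ u, ¬ IsDVertex n u → V u = 0 then
    h.exists.choose
  else fun _ => 0

/-- The reduced costs of an agent edge `(u,u')` of `𝔇_n` w.r.t. the policy `π`. -/
noncomputable def zD (n : ℕ) (p : BV → ℚ) (π : DV → DV) (u u' : DV) : ℚ :=
  rD n u u' + DVal n p π u' - DVal n p π u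

/-- An agent edge of `𝔇_n` is an improving switch if its reduced costs are positive. -/
def DImproving (n : ℕ) (p : BV → ℚ) (π : DV → DV) (u u' : DV) : Prop :=
  DEdge n u u' ∧ 0 < zD n p π u u'

/-- One (agent or positive-probability randomization) step of the process `𝔇_n` under `π`. -/
def DStep (n : ℕ) (p : BV → ℚ) (π : DV → DV) (u u' : DV) : Prop :=
  (IsDAgent n u ∧ u' = π u) ∨
  (∃ v w, DEdgePair n v w ∧ u = DV.y v w ∧
    ((u' = DV.z v w ∧ 0 < p v) ∨ (u' = DV.base v ∧ 0 < 1 - p v)))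

/-- A policy for `𝔇_n` is weak unichain if it reaches `s` with probability one from every
vertex, i.e. `s` is reachable via active/positive-probability steps from every vertex. -/
def DWeakUnichain (n : ℕ) (p : BV → ℚ) (π : DV → DV) : Prop :=
  ∀ u, IsDVertex n u → Relation.ReflTransGen (DStep n p π) u (DV.base BV.s)

/-- The twin policy of a policy `π` for `𝔅_n`: every vertex `v ≠ s` is `π v`-oriented. -/
def twin (π : BV → BV) : DV → DV := fun u =>
  match u with
  | DV.base v => if v = BV.s then DV.base BV.s else DV.x v (π v)
  | DV.x v w => if w = π v then DV.y v w else DV.base v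
  | DV.y v w => DV.y v w
  | DV.z _ w => DV.base w

/-- The vertex numbering `𝒩_V` of `𝔅_n`: the order `(t, a 1, b 1, a 2, b 2, …, a n, b n, d, s)`. -/
def NV (n : ℕ) : BV → ℕ
  | BV.t => 1
  | BV.a i => 2 * i
  | BV.b i => 2 * i + 1
  | BV.d => 2 * n + 2
  | BV.s => 2 * n + 3

/-- The specific probabilities `p_v = 2^{-𝒩_V(v)·(n+5)}`. -/
noncomputable def pSpec (n : ℕ) (v : BV) : ℚ := (2 : ℚ) ^ (-((NV n v * (n + 5) : ℕ) : ℤ))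

/-- The set `B(v)` of agent edges of `𝔇_n` belonging to the vertex `v`. -/
def Belongs (n : ℕ) (v : BV) (e : DV × DV) : Prop :=
  ∃ w, DEdgePair n v w ∧
    (e = (DV.x v w, DV.y v w) ∨ e = (DV.base v, DV.x v w) ∨ e = (DV.x v w, DV.base v))

/-- Applying the improving switch `e` to the policy `π` yields `π'`. -/
def DApply (n : ℕ) (p : BV → ℚ) (π : DV → DV) (e : DV × DV) (π' : DV → DV) : Prop :=
  DImproving n p π e.1 e.2 ∧ π' = Function.update π e.1 e.2

/-- One step of Bland's policy iteration on `𝔇_n` with edge numbering `N`. -/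
def IsBlandStepD (n : ℕ) (p : BV → ℚ) (N : DV → DV → ℕ) (π π' : DV → DV) : Prop :=
  ∃ u u', DImproving n p π u u' ∧ (∀ a b, DImproving n p π a b → N u u' ≤ N a b) ∧
    π' = Function.update π u u'

/-- One step of Dantzig's policy iteration on `𝔇_n`: apply an improving switch of maximal
reduced costs. -/
def DantzigStep (n : ℕ) (p : BV → ℚ) (π π' : DV → DV) : Prop :=
  ∃ u u', DImproving n p π u u' ∧
    (∀ a b, DImproving n p π a b → zD n p π a b ≤ zD n p π u u') ∧
    π' = Function.update π u u'

/-- The finite set of vertices of `𝔅_n`, as a `Finset`. -/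
noncomputable def BVSet (n : ℕ) : Finset BV :=
  {BV.t, BV.d, BV.s} ∪ (Finset.Icc 1 n).image BV.a ∪ (Finset.Icc 1 n).image BV.b

/-- The finite set of agent vertices of `𝔇_n`, as a `Finset`. -/
noncomputable def DAgentSet (n : ℕ) : Finset DV := by
  classical
  exact ((BVSet n).image DV.base) ∪
    (((BVSet n ×ˢ BVSet n).filter fun e => DEdgePair n e.1 e.2).image fun e => DV.x e.1 e.2) ∪
    (((BVSet n ×ˢ BVSet n).filter fun e => DEdgePair n e.1 e.2).image fun e => DV.z e.1 e.2)

/-- The objective of the Largest Increase rule: the sum of the values of all agent vertices. -/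
noncomputable def LIobj (n : ℕ) (p : BV → ℚ) (π : DV → DV) : ℚ :=
  ∑ u ∈ DAgentSet n, DVal n p π u

/-- One step of the Largest Increase policy iteration on `𝔇_n`: apply an improving switch
maximizing the sum of all agent vertex values of the resulting policy. -/
def LIStep (n : ℕ) (p : BV → ℚ) (π π' : DV → DV) : Prop :=
  ∃ u u', DImproving n p π u u' ∧
    (∀ a b, DImproving n p π a b →
      LIobj n p (Function.update π a b) ≤ LIobj n p (Function.update π u u')) ∧
    π' = Function.update π u u'

/-- `N` is a Bland numbering `𝒩_{𝔇_n}` for `𝔇_n`: it is injective on agent edges, the edges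
`(x v w, v)` all come first, within each gadget `(x v w, y v w)` precedes `(v, x v w)`,
the gadget blocks are ordered according to `𝒩_{𝔅_n}`, and the self-loop comes last. -/
def IsDBlandNumbering (n : ℕ) (N : DV → DV → ℕ) : Prop :=
  (∀ u₁ u₂ u₁' u₂', DEdge n u₁ u₂ → DEdge n u₁' u₂' → N u₁ u₂ = N u₁' u₂' →
    u₁ = u₁' ∧ u₂ = u₂') ∧
  (∀ v w v' w', DEdgePair n v w → DEdgePair n v' w' →
    N (DV.x v w) (DV.base v) < N (DV.x v' w') (DV.y v' w')) ∧
  (∀ v w, DEdgePair n v w → N (DV.x v w) (DV.y v w) < N (DV.base v) (DV.x v w)) ∧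
  (∀ v w v' w', DEdgePair n v w → DEdgePair n v' w' → NB n v w < NB n v' w' →
    N (DV.base v) (DV.x v w) < N (DV.x v' w') (DV.y v' w')) ∧
  (∀ v w, DEdgePair n v w → N (DV.base v) (DV.x v w) < N (DV.base BV.s) (DV.base BV.s))
/-! ## Abstract policies and their values -/

/-- The choice made at a vertex `a i`: enter, skip or board. -/
inductive Ch : Type where
  | E : Ch
  | S : Ch
  | B : Ch
deriving DecidableEq

/-- The Bellman equations of an abstract policy, extended by zero above level `n`. -/
structure Vals (n t : ℕ) (c : ℕ → Ch) (f : ℕ → Bool) (α β : ℕ → ℚ) (τ : ℚ) : Prop where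
  aE : ∀ i, 1 ≤ i → c i = Ch.E → α i = 2 ^ i + β i
  aS : ∀ i, 1 ≤ i → c i = Ch.S → α i = α (i + 1)
  aB : ∀ i, 1 ≤ i → c i = Ch.B → α i = τ - 2 ^ i + 5 / 4
  bS : ∀ i, 1 ≤ i → f i = true → β i = 3 / 4 + β (i + 1)
  bL : ∀ i, 1 ≤ i → f i = false → β i = α (i + 1)
  tt : τ = α t
  topc : ∀ i, n < i → c i = Ch.S
  topf : ∀ i, n < i → f i = false
  topa : ∀ i, n < i → α i = 0
  topb : ∀ i, n < i → β i = 0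

/-- Gain (reduced cost) of the switch of kind `κ` at level `i`. -/
def gn (α β : ℕ → ℚ) (τ : ℚ) (κ i : ℕ) : ℚ :=
  match κ with
  | 0 => 2 ^ i + β i - α i
  | 1 => α (i + 1) - α i
  | 2 => τ - 2 ^ i + 5 / 4 - α i
  | 3 => 3 / 4 + β (i + 1) - β i
  | _ => α (i + 1) - β i

/-- New choices at the `a`-vertices after a switch. -/
def updC (κ : ℕ) (c : ℕ → Ch) (i : ℕ) : ℕ → Ch :=
  match κ with
  | 0 => Function.update c i Ch.E
  | 1 => Function.update c i Ch.S
  | 2 => Function.update c i Ch.B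
  | _ => c

/-- New choices at the `b`-vertices after a switch. -/
def updF (κ : ℕ) (f : ℕ → Bool) (i : ℕ) : ℕ → Bool :=
  match κ with
  | 0 => f
  | 1 => f
  | 2 => f
  | 3 => Function.update f i true
  | _ => Function.update f i false

/-- No travel edge is improving. -/
def NoT (n : ℕ) (α : ℕ → ℚ) (τ : ℚ) : Prop := ∀ j, 1 ≤ j → j ≤ n → α j ≤ τ

/-- No switch at level `i` is improving. -/
def NoL (α β : ℕ → ℚ) (τ : ℚ) (i : ℕ) : Prop := ∀ κ, κ < 5 → gn α β τ κ i ≤ 0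

/-- Bland's rule selects the switch of kind `κ` at level `i`. -/
structure LC (n : ℕ) (α β : ℕ → ℚ) (τ : ℚ) (κ i : ℕ) : Prop where
  i1 : 1 ≤ i
  i2 : i ≤ n
  k5 : κ < 5
  noT : NoT n α τ
  low : ∀ i', 1 ≤ i' → i' < i → NoL α β τ i'
  lev : ∀ κ', κ' < κ → gn α β τ κ' i ≤ 0
  pos : 0 < gn α β τ κ i

/-- Bland's rule selects `travel j`. -/
structure TC (n : ℕ) (α : ℕ → ℚ) (τ : ℚ) (j : ℕ) : Prop where
  j1 : 1 ≤ j
  j2 : j ≤ n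
  low : ∀ j', 1 ≤ j' → j' < j → α j' ≤ τ
  pos : τ < α j

/-- The claim of the theorem for the switch of kind `κ` at level `i`. -/
def Qp (α β : ℕ → ℚ) (τ : ℚ) (κ i : ℕ) : Prop :=
  (κ = 1 → τ - 2 ^ i + 5 / 4 < α (i + 1)) ∧
  (κ = 0 → α (i + 1) < 2 ^ i + β i ∧ τ - 2 ^ i + 5 / 4 < 2 ^ i + β i)

/-- Level `i` fits to level `i+1`. -/
def Adj (c : ℕ → Ch) (f : ℕ → Bool) (i : ℕ) : Prop :=
  (c i = Ch.E ∧ f i = false ∧ c (i + 1) ≠ Ch.B) ∨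
  (c i = Ch.E ∧ f i = true ∧ c (i + 1) = Ch.B) ∨
  (c i = Ch.B ∧ f i = true ∧ c (i + 1) = Ch.B) ∨
  (c i = Ch.B ∧ f i = false ∧ c (i + 1) = Ch.S ∧ f (i + 1) = true) ∨
  (c i = Ch.S ∧ f i = true ∧ c (i + 1) = Ch.E) ∨
  (c i = Ch.S ∧ f i = false ∧ c (i + 1) = Ch.S ∧ f (i + 1) = false)

/-- All levels from `m` on fit together. -/
def AdjF (c : ℕ → Ch) (f : ℕ → Bool) (m : ℕ) : Prop := ∀ i, m ≤ i → Adj c f i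

/-- The invariant: the possible shapes of visited policies. -/
inductive PInv (t : ℕ) (c : ℕ → Ch) (f : ℕ → Bool) : Prop where
  | I1 (h1 : c 1 = Ch.S) (h2 : f 1 = false) (h3 : c 2 ≠ Ch.B) (h4 : AdjF c f 2)
      (h5 : t = 1 ∨ t = 2)
  | AK (h1 : c 1 = Ch.E) (h2 : AdjF c f 1) (h3 : 1 ≤ t) (h4 : c t ≠ Ch.B)
  | D (k : ℕ) (hk : 1 ≤ k) (h1 : t = 1) (h2 : ∀ i, 1 ≤ i → i ≤ k → c i = Ch.E ∧ f i = false)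
      (h3 : c (k + 1) = Ch.S) (h4 : f (k + 1) = false) (h5 : c (k + 2) = Ch.E)
      (h6 : AdjF c f (k + 2))
  | C (k : ℕ) (hk : 1 ≤ k) (h1 : t = 1) (h2 : ∀ i, 1 ≤ i → i < k → c i = Ch.E ∧ f i = false)
      (h3 : c k = Ch.E) (h4 : f k = true)
      (h5 : (c (k + 1) = Ch.S ∧ f (k + 1) = false ∧ c (k + 2) ≠ Ch.B) ∨
        (c (k + 1) = Ch.B ∧ Adj c f (k + 1)))
      (h6 : AdjF c f (k + 2))
  | F (k : ℕ) (hk : 1 ≤ k) (h1 : t = 1) (h2 : ∀ i, 1 ≤ i → i < k → c i = Ch.E ∧ f i = false)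
      (h3 : c k = Ch.E) (h4 : f k = true) (h5 : c (k + 1) = Ch.E) (h6 : AdjF c f (k + 1))
  | G (k j : ℕ) (hj : 1 ≤ j) (hk : j ≤ k) (h1 : t = k + 1)
      (h2 : ∀ i, 1 ≤ i → i < j → c i = Ch.B ∧ f i = false)
      (h2' : ∀ i, j ≤ i → i < k → c i = Ch.E ∧ f i = false)
      (h3 : c k = Ch.E) (h4 : f k = true) (h5 : c (k + 1) = Ch.E) (h6 : AdjF c f (k + 1))
  | H (q j : ℕ) (hj : j ≤ q) (h1 : t = q + 3)
      (h2 : ∀ i, 1 ≤ i → i ≤ q + 1 → c i = Ch.B)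
      (h3 : ∀ i, 1 ≤ i → i ≤ j → f i = false)
      (h4 : ∀ i, j < i → i ≤ q → f i = true)
      (h5 : f (q + 1) = false) (h6 : c (q + 2) = Ch.S) (h7 : f (q + 2) = true)
      (h8 : c (q + 3) = Ch.E) (h9 : AdjF c f (q + 3))
  | H1 (h1 : t = 2) (h2 : c 1 = Ch.S) (h3 : f 1 = true) (h4 : c 2 = Ch.E) (h5 : AdjF c f 2)

/-- Conclusion of the abstract invariance lemma. -/
def Concl (n t : ℕ) (c : ℕ → Ch) (f : ℕ → Bool) (α β : ℕ → ℚ) (τ : ℚ) : Prop :=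
  (∀ j, TC n α τ j → PInv j c f) ∧
  (∀ κ i, LC n α β τ κ i → PInv t (updC κ c i) (updF κ f i) ∧ Qp α β τ κ i)

section Abstract

variable {n t : ℕ} {c : ℕ → Ch} {f : ℕ → Bool} {α β : ℕ → ℚ} {τ : ℚ}

lemma two_le_pow_q {i : ℕ} (hi : 1 ≤ i) : (2 : ℚ) ≤ 2 ^ i := by
  calc (2 : ℚ) = 2 ^ 1 := by norm_num
    _ ≤ 2 ^ i := pow_le_pow_right₀ (by norm_num) hi

lemma finishL (K L : ℕ) (hL : 1 ≤ L) (noT : NoT n α τ)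
    (low : ∀ i', 1 ≤ i' → i' < L → NoL α β τ i')
    (lev : ∀ κ', κ' < K → gn α β τ κ' L ≤ 0) (pos : 0 < gn α β τ K L) (hK : K < 5)
    (goal : L ≤ n → PInv t (updC K c L) (updF K f L) ∧ Qp α β τ K L) :
    Concl n t c f α β τ := by
  refine ⟨fun j hj => absurd hj.pos (not_lt.2 (noT j hj.j1 hj.j2)), fun κ i h => ?_⟩
  rcases lt_trichotomy i L with hi | hi | hi
  · exact absurd h.pos (not_lt.2 (low i h.i1 hi κ h.k5))
  · subst hi
    rcases lt_trichotomy κ K with hk | hk | hk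
    · exact absurd h.pos (not_lt.2 (lev κ hk))
    · subst hk; exact goal h.i2
    · exact absurd pos (not_lt.2 (h.lev K hk))
  · exact absurd pos (not_lt.2 (h.low L hL hi K hK))

lemma finishT (J : ℕ) (hJ : 1 ≤ J) (hJn : J ≤ n) (low : ∀ j', 1 ≤ j' → j' < J → α j' ≤ τ)
    (pos : τ < α J) (goal : PInv J c f) : Concl n t c f α β τ := by
  refine ⟨fun j h => ?_, fun κ i h => absurd pos (not_lt.2 (h.noT J hJ hJn))⟩
  rcases lt_trichotomy j J with hi | hi | hi
  · exact absurd h.pos (not_lt.2 (low j h.j1 hi))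
  · subst hi; exact goal
  · exact absurd pos (not_lt.2 (h.low J hJ hi))

lemma NoL.mk (h0 : 2 ^ i + β i ≤ α i) (h1 : α (i + 1) ≤ α i) (h2 : τ - 2 ^ i + 5 / 4 ≤ α i)
    (h3 : 3 / 4 + β (i + 1) ≤ β i) (h4 : α (i + 1) ≤ β i) : NoL α β τ i := by
  intro κ hκ
  interval_cases κ <;> simp only [gn] <;> linarith

/-- Monotonicity of the values in a fitting region. -/
lemma Vals.mono (V : Vals n t c f α β τ) {m : ℕ} (hm : 1 ≤ m) (hA : AdjF c f m) (i : ℕ)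
    (hi : m ≤ i) :
    (c i ≠ Ch.B → ∀ j, i ≤ j → c j ≠ Ch.B → α j ≤ α i) ∧
    (c i = Ch.B → ∀ j, i ≤ j → c j ≠ Ch.B → α j ≤ β i) := by
  by_cases hin : n < i
  · refine ⟨fun _ j hj _ => ?_, fun _ j hj _ => ?_⟩
    · rw [V.topa i hin, V.topa j (by omega)]
    · rw [V.topb i hin, V.topa j (by omega)]
  · have ih := Vals.mono V hm hA (i + 1) (by omega)
    have p2 := two_le_pow_q (show 1 ≤ i by omega)
    have hi1 : 1 ≤ i := by omega
    have key : ∀ j, i ≤ j → j = i ∨ i + 1 ≤ j := fun j hj => by omega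
    rcases hA i hi with ⟨h1, h2, h3⟩ | ⟨h1, h2, h3⟩ | ⟨h1, h2, h3⟩ | ⟨h1, h2, h3, h4⟩ |
      ⟨h1, h2, h3⟩ | ⟨h1, h2, h3, h4⟩
    · refine ⟨fun _ j hj hc => ?_, fun h => by simp [h1] at h⟩
      rcases key j hj with rfl | hj
      · exact le_rfl
      · have := ih.1 h3 j hj hc
        rw [V.aE i hi1 h1, V.bL i hi1 h2]; linarith
    · refine ⟨fun _ j hj hc => ?_, fun h => by simp [h1] at h⟩
      rcases key j hj with rfl | hj
      · exact le_rfl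
      · have := ih.2 h3 j hj hc
        rw [V.aE i hi1 h1, V.bS i hi1 h2]; linarith
    · refine ⟨fun h => absurd h1 h, fun _ j hj hc => ?_⟩
      rcases key j hj with rfl | hj
      · exact absurd h1 hc
      · have := ih.2 h3 j hj hc
        rw [V.bS i hi1 h2]; linarith
    · refine ⟨fun h => absurd h1 h, fun _ j hj hc => ?_⟩
      rcases key j hj with rfl | hj
      · exact absurd h1 hc
      · have := ih.1 (by simp [h3]) j hj hc
        rw [V.bL i hi1 h2]; linarith
    · refine ⟨fun _ j hj hc => ?_, fun h => by simp [h1] at h⟩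
      rcases key j hj with rfl | hj
      · exact le_rfl
      · have := ih.1 (by simp [h3]) j hj hc
        rw [V.aS i hi1 h1]; linarith
    · refine ⟨fun _ j hj hc => ?_, fun h => by simp [h1] at h⟩
      rcases key j hj with rfl | hj
      · exact le_rfl
      · have := ih.1 (by simp [h3]) j hj hc
        rw [V.aS i hi1 h1]; linarith
termination_by n + 1 - i

/-- If `α j ≤ τ` for all non-boarding levels, no travel edge improves. -/
lemma Vals.noT (V : Vals n t c f α β τ) (h : ∀ j, 1 ≤ j → c j ≠ Ch.B → α j ≤ τ) :
    NoT n α τ := by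
  intro j hj _
  by_cases hc : c j = Ch.B
  · rw [V.aB j hj hc]
    have := two_le_pow_q hj
    linarith
  · exact h j hj hc

/-- `τ` in terms of `α i` when `t = 1` and all levels below `i` are enter/leave. -/
lemma Vals.pre (V : Vals n t c f α β τ) (ht : t = 1) (k : ℕ)
    (h : ∀ i, 1 ≤ i → i < k → c i = Ch.E ∧ f i = false) :
    ∀ i, 1 ≤ i → i ≤ k → τ = α i + 2 ^ i - 2 := by
  intro i hi
  induction i, hi using Nat.le_induction with
  | base => intro _; rw [V.tt, ht]; ring
  | succ i hi ih =>
    intro hk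
    rw [ih (by omega), V.aE i hi (h i hi (by omega)).1, V.bL i hi (h i hi (by omega)).2, pow_succ]
    ring

lemma Vals.preNoL (V : Vals n t c f α β τ) (ht : t = 1) (k : ℕ)
    (h : ∀ i, 1 ≤ i → i < k → c i = Ch.E ∧ f i = false) (hk : c k = Ch.E) :
    ∀ i, 1 ≤ i → i < k → NoL α β τ i := by
  intro i hi hik
  have e1 := V.pre ht k h i hi hik.le
  have e2 := V.aE i hi (h i hi hik).1
  have e3 := V.bL i hi (h i hi hik).2
  have e4 : α (i + 1) = 2 ^ (i + 1) + β (i + 1) := by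
    rcases Nat.lt_or_ge (i + 1) k with h' | h'
    · exact V.aE _ (by omega) (h _ (by omega) h').1
    · have : i + 1 = k := by omega
      exact V.aE _ (by omega) (this ▸ hk)
  have p := two_le_pow_q hi
  rw [pow_succ] at e4
  apply NoL.mk <;> linarith

lemma absI1 (V : Vals n t c f α β τ) (h1 : c 1 = Ch.S) (h2 : f 1 = false) (h3 : c 2 ≠ Ch.B)
    (h4 : AdjF c f 2) (h5 : t = 1 ∨ t = 2) : Concl n t c f α β τ := by
  have e1 := V.aS 1 le_rfl h1
  have e2 := V.bL 1 le_rfl h2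
  have et : τ = α 2 := by
    rw [V.tt]; rcases h5 with rfl | rfl
    · exact e1
    · rfl
  have mono := (V.mono (by norm_num) h4 2 le_rfl).1 h3
  norm_num at e1 e2
  apply finishL 0 1 le_rfl
  · apply V.noT
    intro j hj hc
    rcases Nat.lt_or_ge j 2 with hj2 | hj2
    · have : j = 1 := by omega
      subst this; linarith
    · linarith [mono j hj2 hc]
  · intro i' _ _; omega
  · intro _ h; omega
  · simp only [gn]; linarith
  · norm_num
  · intro hn
    refine ⟨PInv.AK ?_ ?_ ?_ ?_, ?_⟩
    · simp [updC]
    · intro i hi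
      rcases Nat.lt_or_ge i 2 with h | h
      · have : i = 1 := by omega
        subst this
        left; simp [updC, updF, h2, h3]
      · have := h4 i h
        have hne : i ≠ 1 := by omega
        have hne2 : i ≠ 0 := by omega
        simpa [Adj, updC, updF, Function.update, hne, hne2] using this
    · omega
    · rcases h5 with rfl | rfl <;> simp [updC, h3]
    · refine ⟨by simp, fun _ => ?_⟩
      norm_num
      constructor <;> linarith

lemma absD (V : Vals n t c f α β τ) (k : ℕ) (hk : 1 ≤ k) (h1 : t = 1)
    (h2 : ∀ i, 1 ≤ i → i ≤ k → c i = Ch.E ∧ f i = false)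
    (h3 : c (k + 1) = Ch.S) (h4 : f (k + 1) = false) (h5 : c (k + 2) = Ch.E)
    (h6 : AdjF c f (k + 2)) : Concl n t c f α β τ := by
  have h2' : ∀ i, 1 ≤ i → i < k + 1 → c i = Ch.E ∧ f i = false :=
    fun i a b => h2 i a (by omega)
  have pre := V.pre h1 (k + 1) h2'
  have mono := (V.mono (by omega) h6 (k + 2) le_rfl).1 (by simp [h5])
  have e1 := V.aS (k + 1) (by omega) h3
  have e2 := V.bL (k + 1) (by omega) h4
  have e3 := V.aE k hk (h2 k hk le_rfl).1
  have e4 := V.bL k hk (h2 k hk le_rfl).2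
  have et := pre (k + 1) (by omega) le_rfl
  have etk := pre k hk (by omega)
  have p := two_le_pow_q hk
  rw [pow_succ] at et
  simp only [add_assoc] at e1 e2
  norm_num at e1 e2
  apply finishL 3 k hk
  · apply V.noT
    intro j hj hc
    rcases Nat.lt_or_ge j (k + 2) with hj2 | hj2
    · have := pre j hj (by omega)
      have := two_le_pow_q hj
      linarith
    · linarith [mono j hj2 hc]
  · exact V.preNoL h1 k (fun i a b => h2 i a b.le) (h2 k hk le_rfl).1
  · intro κ hκ
    interval_cases κ <;> simp only [gn] <;> linarith
  · simp only [gn]; linarith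
  · norm_num
  · intro hn
    refine ⟨PInv.C k hk h1 ?_ ?_ ?_ (Or.inl ⟨?_, ?_, ?_⟩) ?_, by simp [Qp]⟩
    · intro i hi hik
      have hne : i ≠ k := by omega
      simpa [updC, updF, Function.update, hne] using h2 i hi hik.le
    · simpa [updC] using (h2 k hk le_rfl).1
    · simp [updF]
    · simpa [updC] using h3
    · simpa [updF] using h4
    · simp [updC, h5]
    · intro i hi
      have := h6 i hi
      have hne : i ≠ k := by omega
      have hne2 : i + 1 ≠ k := by omega
      simpa [Adj, updC, updF, Function.update, hne, hne2] using this

lemma absC (V : Vals n t c f α β τ) (k : ℕ) (hk : 1 ≤ k) (h1 : t = 1)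
    (h2 : ∀ i, 1 ≤ i → i < k → c i = Ch.E ∧ f i = false)
    (h3 : c k = Ch.E) (h4 : f k = true)
    (h5 : (c (k + 1) = Ch.S ∧ f (k + 1) = false ∧ c (k + 2) ≠ Ch.B) ∨
        (c (k + 1) = Ch.B ∧ Adj c f (k + 1)))
    (h6 : AdjF c f (k + 2)) : Concl n t c f α β τ := by
  have pre := V.pre h1 k h2
  have e3 := V.aE k hk h3
  have e4 := V.bS k hk h4
  have etk := pre k hk le_rfl
  have p := two_le_pow_q hk
  have pk : (2 : ℚ) ^ (k + 1) = 2 * 2 ^ k := by rw [pow_succ]; ring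
  -- the key facts about level `k+1`
  have key : α (k + 1) = β (k + 1) ∧ (∀ j, k + 1 ≤ j → c j ≠ Ch.B → α j ≤ β (k + 1)) ∧
      α (k + 2) ≤ β (k + 1) := by
    rcases h5 with ⟨g1, g2, g3⟩ | ⟨g1, g2⟩
    · have e1 := V.aS (k + 1) (by omega) g1
      have e2 := V.bL (k + 1) (by omega) g2
      have mono := (V.mono (by omega) h6 (k + 2) le_rfl).1 g3
      simp only [add_assoc] at e1 e2
      norm_num at e1 e2
      refine ⟨by linarith, fun j hj hc => ?_, by linarith⟩
      rcases Nat.lt_or_ge j (k + 2) with hj2 | hj2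
      · have : j = k + 1 := by omega
        subst this; linarith
      · linarith [mono j hj2 hc]
    · have hA : AdjF c f (k + 1) := by
        intro i hi
        rcases Nat.lt_or_ge i (k + 2) with h | h
        · have : i = k + 1 := by omega
          subst this; exact g2
        · exact h6 i h
      have mono := (V.mono (by omega) hA (k + 1) le_rfl).2 g1
      have e1 := V.aB (k + 1) (by omega) g1
      have e5 : α (k + 1) = β (k + 1) := by linarith
      refine ⟨e5, mono, ?_⟩
      by_cases hc : c (k + 2) = Ch.B
      · have e6 := V.aB (k + 2) (by omega) hc
        have : (2 : ℚ) ^ (k + 2) = 4 * 2 ^ k := by rw [pow_add]; ring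
        linarith
      · exact mono (k + 2) (by omega) hc
  obtain ⟨k1, k2, k3⟩ := key
  apply finishL 0 (k + 1) (by omega)
  · apply V.noT
    intro j hj hc
    rcases Nat.lt_or_ge j (k + 1) with hj2 | hj2
    · have := pre j hj (by omega)
      have := two_le_pow_q hj
      linarith
    · linarith [k2 j hj2 hc]
  · intro i hi hik
    rcases Nat.lt_or_ge i k with h | h
    · exact V.preNoL h1 k h2 h3 i hi h
    · have : i = k := by omega
      subst this
      apply NoL.mk <;> linarith
  · intro _ h; omega
  · simp only [gn]; linarith
  · norm_num
  · intro hn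
    refine ⟨PInv.F k hk h1 ?_ ?_ ?_ ?_ ?_, by simp, fun _ => ⟨?_, ?_⟩⟩
    · intro i hi hik
      have hne : i ≠ k + 1 := by omega
      simpa [updC, updF, Function.update, hne] using h2 i hi hik
    · simpa [updC] using h3
    · simpa [updF] using h4
    · simp [updC]
    · intro i hi
      rcases Nat.lt_or_ge i (k + 2) with h | h
      · have : i = k + 1 := by omega
        subst this
        rcases h5 with ⟨g1, g2, g3⟩ | ⟨g1, g2⟩
        · left; simp [updC, updF, g2, g3]
        · rcases g2 with ⟨h1, h2, h3⟩ | ⟨h1, h2, h3⟩ | ⟨h1, h2, h3⟩ | ⟨h1, h2, h3, h4⟩ |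
            ⟨h1, h2, h3⟩ | ⟨h1, h2, h3, h4⟩ <;> simp_all [Adj, updC, updF]
      · have := h6 i h
        have hne : i ≠ k + 1 := by omega
        have hne2 : i ≠ k := by omega
        simpa [Adj, updC, updF, Function.update, hne, hne2] using this
    · simp only [add_assoc]; norm_num; linarith
    · linarith

lemma absF (V : Vals n t c f α β τ) (k : ℕ) (hk : 1 ≤ k) (h1 : t = 1)
    (h2 : ∀ i, 1 ≤ i → i < k → c i = Ch.E ∧ f i = false)
    (h3 : c k = Ch.E) (h4 : f k = true) (h5 : c (k + 1) = Ch.E) (h6 : AdjF c f (k + 1)) :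
    Concl n t c f α β τ := by
  have pre := V.pre h1 k h2
  have e3 := V.aE k hk h3
  have e4 := V.bS k hk h4
  have e5 := V.aE (k + 1) (by omega) h5
  have etk := pre k hk le_rfl
  have p := two_le_pow_q hk
  have pk : (2 : ℚ) ^ (k + 1) = 2 * 2 ^ k := by rw [pow_succ]; ring
  apply finishT (k + 1) (by omega)
  · by_contra h
    have := V.topc (k + 1) (by omega)
    simp [this] at h5
  · intro j hj hjk
    have := pre j hj (by omega)
    have := two_le_pow_q hj
    linarith
  · linarith
  · exact PInv.G k 1 le_rfl hk rfl (fun i a b => by omega) h2 h3 h4 h5 h6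

lemma absG (V : Vals n t c f α β τ) (k j : ℕ) (hj : 1 ≤ j) (hk : j ≤ k) (h1 : t = k + 1)
    (h2 : ∀ i, 1 ≤ i → i < j → c i = Ch.B ∧ f i = false)
    (h2' : ∀ i, j ≤ i → i < k → c i = Ch.E ∧ f i = false)
    (h3 : c k = Ch.E) (h4 : f k = true) (h5 : c (k + 1) = Ch.E) (h6 : AdjF c f (k + 1)) :
    Concl n t c f α β τ := by
  have hk1 : 1 ≤ k := by omega
  have e3 := V.aE k hk1 h3
  have e4 := V.bS k hk1 h4
  have e5 := V.aE (k + 1) (by omega) h5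
  have et : τ = α (k + 1) := by rw [V.tt, h1]
  have p := two_le_pow_q hk1
  have pk : (2 : ℚ) ^ (k + 1) = 2 * 2 ^ k := by rw [pow_succ]; ring
  -- values of the enter levels
  have vE : ∀ d i, i + d = k → j ≤ i → α i = τ - 2 ^ i + 3 / 4 := by
    intro d
    induction d with
    | zero => intro i hi hji; simp at hi; subst hi; linarith
    | succ d ih =>
      intro i hi hji
      have := ih (i + 1) (by omega) (by omega)
      have a1 := V.aE i (by omega) (h2' i hji (by omega)).1
      have a2 := V.bL i (by omega) (h2' i hji (by omega)).2
      rw [pow_succ] at this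
      linarith
  have vB : ∀ i, 1 ≤ i → i < j → α i = τ - 2 ^ i + 5 / 4 := fun i a b => V.aB i a (h2 i a b).1
  have lo : ∀ i, 1 ≤ i → i ≤ k → τ - 2 ^ i + 3 / 4 ≤ α i := by
    intro i a b
    rcases Nat.lt_or_ge i j with h | h
    · linarith [vB i a h]
    · linarith [vE (k - i) i (by omega) h]
  have up : ∀ i, 1 ≤ i → i ≤ k → α i ≤ τ - 2 ^ i + 5 / 4 := by
    intro i a b
    rcases Nat.lt_or_ge i j with h | h
    · linarith [vB i a h]
    · linarith [vE (k - i) i (by omega) h]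
  have noT : NoT n α τ := by
    apply V.noT
    intro i hi hc
    rcases Nat.lt_or_ge k i with h | h
    · rw [et]; exact (V.mono (by omega) h6 (k + 1) le_rfl).1 (by simp [h5]) i h hc
    · linarith [up i hi h, two_le_pow_q hi]
  have low : ∀ i, 1 ≤ i → i < j → NoL α β τ i := by
    intro i hi hij
    have b1 := V.bL i hi (h2 i hi hij).2
    have u1 := up (i + 1) (by omega) (by omega)
    have l1 := lo (i + 1) (by omega) (by omega)
    have a1 := vB i hi hij
    have pi := two_le_pow_q hi
    have b2 : β (i + 1) ≤ τ - 2 ^ (i + 2) + 5 / 4 := by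
      rcases Nat.lt_or_ge (i + 1) k with h | h
      · have hf : f (i + 1) = false := by
          rcases Nat.lt_or_ge (i + 1) j with h' | h'
          · exact (h2 _ (by omega) h').2
          · exact (h2' _ h' h).2
        rw [V.bL (i + 1) (by omega) hf]
        exact up (i + 2) (by omega) (by omega)
      · have : i + 1 = k := by omega
        subst this
        have : (2 : ℚ) ^ (i + 2) = 2 ^ (i + 1 + 1) := rfl
        linarith
    have q1 : (2 : ℚ) ^ (i + 1) = 2 * 2 ^ i := by rw [pow_succ]; ring
    have q2 : (2 : ℚ) ^ (i + 2) = 4 * 2 ^ i := by rw [pow_add]; ring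
    apply NoL.mk <;> linarith
  have ej := vE (k - j) j (by omega) le_rfl
  have pj := two_le_pow_q hj
  rcases Nat.lt_or_ge j k with hjk | hjk
  · have a1 := V.aE j hj (h2' j le_rfl hjk).1
    have a2 := V.bL j hj (h2' j le_rfl hjk).2
    apply finishL 2 j hj noT low
    · intro κ hκ
      interval_cases κ <;> simp only [gn] <;> linarith
    · simp only [gn]; linarith
    · norm_num
    · intro hn
      refine ⟨PInv.G k (j + 1) (by omega) hjk h1 ?_ ?_ ?_ ?_ ?_ ?_, by simp [Qp]⟩
      · intro i hi hij
        rcases Nat.lt_or_ge i j with h | h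
        · have hne : i ≠ j := by omega
          simpa [updC, updF, Function.update, hne] using h2 i hi h
        · have : i = j := by omega
          subst this
          simpa [updC, updF] using (h2' i le_rfl hjk).2
      · intro i hi hik
        have hne : i ≠ j := by omega
        simpa [updC, updF, Function.update, hne] using h2' i (by omega) hik
      · have hne : k ≠ j := by omega
        simpa [updC, Function.update, hne] using h3
      · simpa [updF] using h4
      · have hne : k + 1 ≠ j := by omega
        simpa [updC, Function.update, hne] using h5
      · intro i hi
        have hne : i ≠ j := by omega
        have hne2 : i + 1 ≠ j := by omega
        simpa [Adj, updC, updF, Function.update, hne, hne2] using h6 i hi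
  · have hjk' : j = k := by omega
    subst hjk'
    apply finishL 1 j hj noT low
    · intro κ hκ
      interval_cases κ; simp only [gn]; linarith
    · simp only [gn]; linarith
    · norm_num
    · intro hn
      refine ⟨?_, fun _ => by linarith, by simp⟩
      have hA : AdjF (updC 1 c j) (updF 1 f j) (j + 1) := by
        intro i hi
        have hne : i ≠ j := by omega
        have hne2 : i + 1 ≠ j := by omega
        simpa [Adj, updC, updF, Function.update, hne, hne2] using h6 i hi
      rcases Nat.lt_or_ge 1 j with h | h
      · obtain ⟨q, rfl⟩ : ∃ q, j = q + 2 := ⟨j - 2, by omega⟩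
        refine PInv.H q q le_rfl h1 ?_ ?_ ?_ ?_ ?_ ?_ ?_ hA
        · intro i hi hq
          have hne : i ≠ q + 2 := by omega
          simpa [updC, Function.update, hne] using (h2 i hi (by omega)).1
        · intro i hi hq
          simpa [updF] using (h2 i hi (by omega)).2
        · intro i hi hq; omega
        · simpa [updF] using (h2 (q + 1) (by omega) (by omega)).2
        · simp [updC]
        · simpa [updF] using h4
        · have hne : q + 3 ≠ q + 2 := by omega
          simpa [updC, Function.update, hne] using h5
      · have : j = 1 := by omega
        subst this
        refine PInv.H1 h1 ?_ ?_ ?_ hA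
        · simp [updC]
        · simpa [updF] using h4
        · simpa [updC] using h5

lemma absH (V : Vals n t c f α β τ) (q j : ℕ) (hj : j ≤ q) (h1 : t = q + 3)
    (h2 : ∀ i, 1 ≤ i → i ≤ q + 1 → c i = Ch.B)
    (h3 : ∀ i, 1 ≤ i → i ≤ j → f i = false)
    (h4 : ∀ i, j < i → i ≤ q → f i = true)
    (h5 : f (q + 1) = false) (h6 : c (q + 2) = Ch.S) (h7 : f (q + 2) = true)
    (h8 : c (q + 3) = Ch.E) (h9 : AdjF c f (q + 3)) : Concl n t c f α β τ := by
  have et : τ = α (q + 3) := by rw [V.tt, h1]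
  have eS : α (q + 2) = τ := by rw [V.aS (q + 2) (by omega) h6, et]
  have vB : ∀ i, 1 ≤ i → i ≤ q + 1 → α i = τ - 2 ^ i + 5 / 4 :=
    fun i a b => V.aB i a (h2 i a b)
  have vb : ∀ d i, i + d = q + 1 → j < i → τ ≤ β i := by
    intro d
    induction d with
    | zero =>
      intro i hi hji
      simp at hi; subst hi
      rw [V.bL (q + 1) (by omega) h5]; exact eS.ge
    | succ d ih =>
      intro i hi hji
      rw [V.bS i (by omega) (h4 i hji (by omega))]
      linarith [ih (i + 1) (by omega) (by omega)]
  have noT : NoT n α τ := by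
    apply V.noT
    intro i hi hc
    rcases Nat.lt_or_ge (q + 2) i with h | h
    · rw [et]; exact (V.mono (by omega) h9 (q + 3) le_rfl).1 (by simp [h8]) i h hc
    · rcases Nat.lt_or_ge (q + 1) i with h' | h'
      · have : i = q + 2 := by omega
        subst this; exact eS.le
      · exact absurd (h2 i hi h') hc
  have gen : ∀ i, 1 ≤ i → i ≤ j → 2 ^ i + β i ≤ α i ∧ α (i + 1) ≤ α i ∧
      τ - 2 ^ i + 5 / 4 ≤ α i ∧ α (i + 1) ≤ β i ∧ β i = τ - 2 ^ (i + 1) + 5 / 4 := by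
    intro i a b
    have e1 := vB i a (by omega)
    have e2 := vB (i + 1) (by omega) (by omega)
    have e3 := V.bL i a (h3 i a b)
    have := two_le_pow_q a
    have q1 : (2 : ℚ) ^ (i + 1) = 2 * 2 ^ i := by rw [pow_succ]; ring
    refine ⟨?_, ?_, ?_, ?_, ?_⟩ <;> linarith
  rcases Nat.eq_zero_or_pos j with rfl | hj0
  · have b1 := vb q 1 (by omega) (by omega)
    have a1 := vB 1 le_rfl (by omega)
    norm_num at a1
    apply finishL 0 1 le_rfl noT
    · intro i' _ _; omega
    · intro _ h; omega
    · simp only [gn]; linarith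
    · norm_num
    · intro hn
      refine ⟨PInv.AK ?_ ?_ ?_ ?_, by simp, fun _ => ?_⟩
      · simp [updC]
      · intro i hi
        rcases Nat.lt_or_ge 1 i with h | h
        · have hne : i ≠ 1 := by omega
          have hne2 : i ≠ 0 := by omega
          have goal : Adj c f i := by
            rcases Nat.lt_or_ge (q + 2) i with g | g
            · exact h9 i g
            · have : i ≤ q ∨ i = q + 1 ∨ i = q + 2 := by omega
              rcases this with g | rfl | rfl
              · exact Or.inr (Or.inr (Or.inl ⟨h2 i hi (by omega), h4 i (by omega) g,
                  h2 (i + 1) (by omega) (by omega)⟩))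
              · exact Or.inr (Or.inr (Or.inr (Or.inl ⟨h2 _ hi (by omega), h5, h6, h7⟩)))
              · exact Or.inr (Or.inr (Or.inr (Or.inr (Or.inl ⟨h6, h7, h8⟩))))
          simpa [Adj, updC, updF, Function.update, hne, hne2] using goal
        · have : i = 1 := by omega
          subst this
          rcases Nat.eq_zero_or_pos q with rfl | hq
          · left; simp_all [updC, updF]
          · right; left
            refine ⟨by simp [updC], h4 1 (by omega) hq, ?_⟩
            simpa [updC] using h2 2 (by omega) (by omega)
      · omega
      · subst h1; simp [updC, h8]
      · have := noT
        have a2 : α 2 ≤ τ := by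
          rcases Nat.eq_zero_or_pos q with rfl | hq
          · exact eS.le
          · have := vB 2 (by omega) (by omega)
            norm_num at this; linarith
        norm_num
        constructor <;> linarith
  · apply finishL 3 j hj0 noT
    · intro i hi hij
      obtain ⟨g1, g2, g3, g4, g5⟩ := gen i hi hij.le
      obtain ⟨_, _, _, _, g5'⟩ := gen (i + 1) (by omega) hij
      have := two_le_pow_q hi
      have q1 : (2 : ℚ) ^ (i + 1) = 2 * 2 ^ i := by rw [pow_succ]; ring
      have q2 : (2 : ℚ) ^ (i + 1 + 1) = 4 * 2 ^ i := by rw [pow_succ, pow_succ]; ring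
      apply NoL.mk <;> linarith
    · obtain ⟨g1, g2, g3, g4, g5⟩ := gen j hj0 le_rfl
      intro κ hκ
      interval_cases κ <;> simp only [gn] <;> linarith
    · obtain ⟨g1, g2, g3, g4, g5⟩ := gen j hj0 le_rfl
      have := vb (q - j) (j + 1) (by omega) (by omega)
      have := two_le_pow_q (show 1 ≤ j + 1 by omega)
      simp only [gn]; linarith
    · norm_num
    · intro hn
      refine ⟨PInv.H q (j - 1) (by omega) h1 h2 ?_ ?_ ?_ h6 ?_ h8 ?_, by simp [Qp]⟩
      · intro i hi hij
        have hne : i ≠ j := by omega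
        simpa [updF, Function.update, hne] using h3 i hi (by omega)
      · intro i hi hij
        by_cases hne : i = j
        · simp [updF, hne]
        · simpa [updF, Function.update, hne] using h4 i (by omega) hij
      · have hne : q + 1 ≠ j := by omega
        simpa [updF, Function.update, hne] using h5
      · have hne : q + 2 ≠ j := by omega
        simpa [updF, Function.update, hne] using h7
      · intro i hi
        have hne : i ≠ j := by omega
        have hne2 : i + 1 ≠ j := by omega
        simpa [Adj, updC, updF, Function.update, hne, hne2] using h9 i hi

lemma absH1 (V : Vals n t c f α β τ) (h1 : t = 2) (h2 : c 1 = Ch.S) (h3 : f 1 = true)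
    (h4 : c 2 = Ch.E) (h5 : AdjF c f 2) : Concl n t c f α β τ := by
  have e1 := V.aS 1 le_rfl h2
  have e2 := V.bS 1 le_rfl h3
  have e3 := V.aE 2 (by norm_num) h4
  have et : τ = α 2 := by rw [V.tt, h1]
  have mono := (V.mono (by norm_num) h5 2 le_rfl).1 (by simp [h4])
  norm_num at e1 e2 e3
  apply finishL 4 1 le_rfl
  · apply V.noT
    intro j hj hc
    rcases Nat.lt_or_ge j 2 with hj2 | hj2
    · have : j = 1 := by omega
      subst this; linarith
    · linarith [mono j hj2 hc]
  · intro i' _ _; omega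
  · intro κ hκ
    interval_cases κ <;> simp only [gn] <;> norm_num <;> linarith
  · simp only [gn]; norm_num; linarith
  · norm_num
  · intro hn
    refine ⟨PInv.I1 h2 ?_ ?_ ?_ (Or.inr h1), by simp [Qp]⟩
    · simp [updF]
    · simp [updC, h4]
    · intro i hi
      have hne : i ≠ 1 := by omega
      have hne2 : i ≠ 0 := by omega
      simpa [Adj, updC, updF, Function.update, hne, hne2] using h5 i hi

lemma absAK (V : Vals n t c f α β τ) (h1 : c 1 = Ch.E) (h2 : AdjF c f 1) (h3 : 1 ≤ t)
    (h4 : c t ≠ Ch.B) : Concl n t c f α β τ := by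
  have mono := V.mono le_rfl h2
  have e1 := V.aE 1 le_rfl h1
  norm_num at e1
  have hn1 : 1 ≤ n := by
    by_contra h
    have := V.topc 1 (by omega)
    simp [this] at h1
  rcases Nat.lt_or_ge 1 t with ht | ht
  · -- travel to level one
    apply finishT 1 le_rfl hn1 (fun j a b => by omega) ?_ (PInv.AK h1 h2 le_rfl (by simp [h1]))
    rw [V.tt, e1]
    rcases h2 1 le_rfl with ⟨_, g2, g3⟩ | ⟨_, g2, g3⟩ | ⟨g, _⟩ | ⟨g, _⟩ | ⟨g, _⟩ | ⟨g, _⟩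
    · rw [V.bL 1 le_rfl g2]
      linarith [(mono 2 (by omega)).1 g3 t ht h4]
    · rw [V.bS 1 le_rfl g2]
      have := (mono 2 (by omega)).2 g3 t ht h4
      norm_num; linarith
    all_goals simp [h1] at g
  · have ht1 : t = 1 := by omega
    have et : τ = α 1 := by rw [V.tt, ht1]
    have noT : NoT n α τ := by
      apply V.noT
      intro j hj hc
      rw [et]; exact (mono 1 le_rfl).1 (by simp [h1]) j hj hc
    -- the first level that is not (enter, leave) followed by enter
    have hex : ∃ k, 1 ≤ k ∧ ¬ (c k = Ch.E ∧ f k = false ∧ c (k + 1) = Ch.E) := by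
      refine ⟨n + 1, by omega, fun h => ?_⟩
      have := V.topc (n + 1) (by omega)
      simp [this] at h
    classical
    obtain ⟨hk, hkP⟩ := Nat.find_spec hex
    have hmin := fun m => @Nat.find_min _ _ hex m
    generalize Nat.find hex = k at hk hkP hmin
    have hlow : ∀ i, 1 ≤ i → i < k → c i = Ch.E ∧ f i = false ∧ c (i + 1) = Ch.E := by
      intro i a b
      by_contra h
      exact hmin i b ⟨a, h⟩
    have hpre : ∀ i, 1 ≤ i → i < k → c i = Ch.E ∧ f i = false :=
      fun i a b => ⟨(hlow i a b).1, (hlow i a b).2.1⟩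
    have hck : c k = Ch.E := by
      rcases Nat.lt_or_ge 1 k with h | h
      · obtain ⟨m, rfl⟩ : ∃ m, k = m + 1 := ⟨k - 1, by omega⟩
        exact (hlow m (by omega) (by omega)).2.2
      · have : k = 1 := by omega
        subst this; exact h1
    rcases h2 k hk with ⟨_, g2, g3⟩ | ⟨_, g2, g3⟩ | ⟨g, _⟩ | ⟨g, _⟩ | ⟨g, _⟩ | ⟨g, _⟩
    · have g4 : c (k + 1) = Ch.S := by
        rcases hc : c (k + 1) with _ | _ | _
        · exact absurd ⟨hck, g2, hc⟩ hkP
        · rfl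
        · exact absurd hc g3
      have preK := V.pre ht1 k hpre k hk le_rfl
      have a1 := V.aE k hk hck
      have a2 := V.bL k hk g2
      have a3 := V.aS (k + 1) (by omega) g4
      have p := two_le_pow_q hk
      have pk : (2 : ℚ) ^ (k + 1) = 2 * 2 ^ k := by rw [pow_succ]; ring
      rcases h2 (k + 1) (by omega) with ⟨g, _⟩ | ⟨g, _⟩ | ⟨g, _⟩ | ⟨g, _⟩ | ⟨_, g5, g6⟩ | ⟨_, g5, g6, g7⟩
      · simp [g4] at g
      · simp [g4] at g
      · simp [g4] at g
      · simp [g4] at g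
      · -- next level is (skip, stay): apply leave at level k+1
        have b1 := V.bS (k + 1) (by omega) g5
        have b2 := V.aE (k + 1 + 1) (by omega) g6
        have pk2 : (2 : ℚ) ^ (k + 1 + 1) = 4 * 2 ^ k := by rw [pow_succ, pow_succ]; ring
        apply finishL 4 (k + 1) (by omega) noT
        · intro i hi hik
          rcases Nat.lt_or_ge i k with h | h
          · exact V.preNoL ht1 k hpre hck i hi h
          · have : i = k := by omega
            subst this
            apply NoL.mk <;> linarith
        · intro κ hκ
          interval_cases κ <;> simp only [gn] <;> linarith
        · simp only [gn]; linarith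
        · norm_num
        · intro hn
          refine ⟨PInv.D k hk ht1 ?_ g4 ?_ g6 ?_, by simp [Qp]⟩
          · intro i hi hik
            have hne : i ≠ k + 1 := by omega
            have : c i = Ch.E ∧ f i = false := by
              rcases Nat.lt_or_ge i k with h | h
              · exact hpre i hi h
              · have : i = k := by omega
                subst this; exact ⟨hck, g2⟩
            simpa [updC, updF, Function.update, hne] using this
          · simp [updF]
          · intro i hi
            have hne : i ≠ k + 1 := by omega
            have hne2 : i ≠ k := by omega
            simpa [Adj, updC, updF, Function.update, hne, hne2] using h2 i (by omega)
      · -- next level is (skip, leave): apply stay at level k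
        have b1 := V.bL (k + 1) (by omega) g5
        apply finishL 3 k hk noT
        · exact V.preNoL ht1 k hpre hck
        · intro κ hκ
          interval_cases κ <;> simp only [gn] <;> linarith
        · simp only [gn]; linarith
        · norm_num
        · intro hn
          refine ⟨PInv.C k hk ht1 ?_ hck ?_ (Or.inl ⟨g4, ?_, ?_⟩) ?_, by simp [Qp]⟩
          · intro i hi hik
            have hne : i ≠ k := by omega
            simpa [updC, updF, Function.update, hne] using hpre i hi hik
          · simp [updF]
          · simpa [updF] using g5
          · have g6' : c (k + 2) = Ch.S := g6
            simp [updC, g6']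
          · intro i hi
            have hne : i ≠ k := by omega
            have hne2 : i + 1 ≠ k := by omega
            simpa [Adj, updC, updF, Function.update, hne, hne2] using h2 i (by omega)
    · exact absC V k hk ht1 hpre hck g2 (Or.inr ⟨g3, h2 _ (by omega)⟩)
        (fun i hi => h2 i (by omega))
    all_goals simp [hck] at g

/-- The abstract invariance lemma. -/
lemma absMain (V : Vals n t c f α β τ) (h : PInv t c f) : Concl n t c f α β τ := by
  cases h with
  | I1 h1 h2 h3 h4 h5 => exact absI1 V h1 h2 h3 h4 h5
  | AK h1 h2 h3 h4 => exact absAK V h1 h2 h3 h4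
  | D k hk h1 h2 h3 h4 h5 h6 => exact absD V k hk h1 h2 h3 h4 h5 h6
  | C k hk h1 h2 h3 h4 h5 h6 => exact absC V k hk h1 h2 h3 h4 h5 h6
  | F k hk h1 h2 h3 h4 h5 h6 => exact absF V k hk h1 h2 h3 h4 h5 h6
  | G k j hj hk h1 h2 h2' h3 h4 h5 h6 => exact absG V k j hj hk h1 h2 h2' h3 h4 h5 h6
  | H q j hj h1 h2 h3 h4 h5 h6 h7 h8 h9 => exact absH V q j hj h1 h2 h3 h4 h5 h6 h7 h8 h9
  | H1 h1 h2 h3 h4 h5 => exact absH1 V h1 h2 h3 h4 h5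

end Abstract

/-! ## Values in the concrete process -/

lemma BVal_s (n : ℕ) (π : BV → BV) : BVal n π BV.s = 0 := by
  classical
  have h : ∃ k, π^[k] BV.s = BV.s := ⟨0, rfl⟩
  unfold BVal
  rw [dif_pos h]
  have : Nat.find h = 0 := (Nat.find_eq_zero h).2 rfl
  rw [this]; simp

lemma BVal_step (n : ℕ) (π : BV → BV) (v : BV) (hv : v ≠ BV.s) (h : ∃ k, π^[k] v = BV.s) :
    BVal n π v = rB n v (π v) + BVal n π (π v) := by
  classical
  have h' : ∃ k, π^[k] (π v) = BV.s := by
    obtain ⟨k, hk⟩ := h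
    cases k with
    | zero => exact absurd hk hv
    | succ k => exact ⟨k, hk⟩
  have key : ∀ N N' : ℕ, N = N' + 1 →
      (∑ i ∈ Finset.range N, rB n (π^[i] v) (π^[i + 1] v)) =
        rB n v (π v) + ∑ i ∈ Finset.range N', rB n (π^[i] (π v)) (π^[i + 1] (π v)) := by
    rintro N N' rfl
    rw [Finset.sum_range_succ']
    simp only [Function.iterate_succ_apply, Function.iterate_zero, id]
    ring
  unfold BVal
  rw [dif_pos h, dif_pos h']
  apply key
  exact Nat.find_comp_succ h h' hv

/-- A potential bounding the rewards. -/
def phi (n : ℕ) : BV → ℚ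
  | BV.t => 2
  | BV.s => 2 ^ (n + 2)
  | BV.d => 2 ^ (n + 2)
  | BV.a i => 2 ^ i
  | BV.b i => 2 ^ (i + 1)

lemma rB_le_phi (n : ℕ) (u v : BV) (h : BEdge n u v) : rB n u v ≤ phi n v - phi n u := by
  have hle : (2 : ℚ) ^ (n + 1) ≤ 2 ^ (n + 2) := pow_le_pow_right₀ (by norm_num) (by omega)
  rcases h with ⟨i, h1, h2, rfl, rfl⟩ | ⟨i, h1, h2, rfl, rfl⟩ | ⟨i, h1, h2, rfl, rfl⟩ |
    ⟨i, h1, h2, rfl, rfl⟩ | ⟨i, h1, h2, rfl, rfl⟩ | ⟨i, h1, h2, rfl, rfl⟩ | ⟨rfl, rfl⟩ | ⟨rfl, rfl⟩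
  · have := two_le_pow_q h1
    simp only [rB, phi]; linarith
  · simp only [rB, phi, if_true, pow_succ]; linarith
  · have := two_le_pow_q h1
    by_cases hi : i = n
    · subst hi
      simp only [aN, if_true, rB, phi]; rw [pow_add]; linarith
    · have : i + 1 ≠ n + 1 := by omega
      simp only [aN, this, if_false, rB, phi, pow_succ]; linarith
  · simp only [rB, phi]; linarith
  · have := two_le_pow_q h1
    by_cases hi : i = n
    · subst hi
      simp only [bN, if_true, rB, phi]; rw [pow_add, pow_add]; linarith
    · have : i + 1 ≠ n + 1 := by omega
      simp only [bN, this, if_false, if_true, rB, phi, pow_succ]; linarith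
  · have := two_le_pow_q h1
    by_cases hi : i = n
    · subst hi
      simp only [aN, if_true, rB, phi]; linarith
    · have : i + 1 ≠ n + 1 := by omega
      simp only [aN, this, if_false, rB, phi]; linarith
  · simp [rB, phi]
  · simp [rB, phi]

lemma BEdge_src {n : ℕ} {u v : BV} (h : BEdge n u v) : IsBVertex n u := by
  rcases h with ⟨i, h1, h2, rfl, rfl⟩ | ⟨i, h1, h2, rfl, rfl⟩ | ⟨i, h1, h2, rfl, rfl⟩ |
    ⟨i, h1, h2, rfl, rfl⟩ | ⟨i, h1, h2, rfl, rfl⟩ | ⟨i, h1, h2, rfl, rfl⟩ | ⟨rfl, rfl⟩ | ⟨rfl, rfl⟩ <;>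
    simp [IsBVertex, *]

lemma BEdge_dst {n : ℕ} {u v : BV} (h : BEdge n u v) : IsBVertex n v := by
  rcases h with ⟨i, h1, h2, rfl, rfl⟩ | ⟨i, h1, h2, rfl, rfl⟩ | ⟨i, h1, h2, rfl, rfl⟩ |
    ⟨i, h1, h2, rfl, rfl⟩ | ⟨i, h1, h2, rfl, rfl⟩ | ⟨i, h1, h2, rfl, rfl⟩ | ⟨rfl, rfl⟩ | ⟨rfl, rfl⟩ <;>
    (try unfold aN) <;> (try unfold bN) <;> (try split_ifs) <;> simp [IsBVertex, *] <;> omega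

lemma Bellman {n : ℕ} {π : BV → BV} (hP : IsBPolicy n π) (hW : BWeakUnichain n π) (v : BV)
    (hv : IsBVertex n v) : BVal n π v = rB n v (π v) + BVal n π (π v) := by
  by_cases hs : v = BV.s
  · subst hs
    have : π BV.s = BV.s := by
      have := hP BV.s trivial
      simpa [BEdge] using this
    rw [this, BVal_s]; simp [rB]
  · exact BVal_step n π v hs (hW v hv)

lemma path_le {n : ℕ} {π : BV → BV} (hP : IsBPolicy n π) (hW : BWeakUnichain n π) (m : ℕ) :
    ∀ v, IsBVertex n v → IsBVertex n (π^[m] v) ∧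
      BVal n π v - BVal n π (π^[m] v) ≤ phi n (π^[m] v) - phi n v := by
  induction m with
  | zero => intro v hv; simp [hv]
  | succ m ih =>
    intro v hv
    have h1 := ih (π v) (BEdge_dst (hP v hv))
    have h2 := Bellman hP hW v hv
    have h3 := rB_le_phi n v (π v) (hP v hv)
    rw [Function.iterate_succ_apply]
    exact ⟨h1.1, by linarith [h1.2]⟩

/-- Improving switches preserve policies and the weak unichain condition. -/
lemma unichain_update {n : ℕ} {π : BV → BV} (hP : IsBPolicy n π) (hW : BWeakUnichain n π)
    {u v : BV} (h : BImproving n π u v) :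
    IsBPolicy n (Function.update π u v) ∧ BWeakUnichain n (Function.update π u v) := by
  obtain ⟨he, hz⟩ := h
  constructor
  · intro w hw
    by_cases hwu : w = u
    · subst hwu; simpa using he
    · simpa [Function.update, hwu] using hP w hw
  · have hne : ∀ m, π^[m] v ≠ u := by
      intro m hm
      have h1 := (path_le hP hW m v (BEdge_dst he)).2
      have h2 := rB_le_phi n u v he
      rw [hm] at h1
      unfold zB at hz
      linarith
    have hit : ∀ m, (Function.update π u v)^[m] v = π^[m] v := by
      intro m
      induction m with
      | zero => rfl
      | succ m ih =>
        rw [Function.iterate_succ_apply', Function.iterate_succ_apply', ih,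
          Function.update_of_ne (hne m)]
    obtain ⟨kv, hkv⟩ := hW v (BEdge_dst he)
    have hu : ∃ k, (Function.update π u v)^[k] u = BV.s :=
      ⟨kv + 1, by rw [Function.iterate_succ_apply, Function.update_self, hit, hkv]⟩
    have gen : ∀ k w, π^[k] w = BV.s → ∃ k, (Function.update π u v)^[k] w = BV.s := by
      intro k
      induction k with
      | zero => intro w hw; exact ⟨0, hw⟩
      | succ k ih =>
        intro w hw
        by_cases hwu : w = u
        · subst hwu; exact hu
        · obtain ⟨m, hm⟩ := ih (π w) hw
          exact ⟨m + 1, by rw [Function.iterate_succ_apply, Function.update_of_ne hwu, hm]⟩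
    intro w hw
    obtain ⟨k, hk⟩ := hW w hw
    exact gen k w hk

/-! ## Abstraction of concrete policies -/

/-- Source of the switch of kind `κ` at level `i`. -/
def src (κ i : ℕ) : BV :=
  match κ with
  | 0 => BV.a i
  | 1 => BV.a i
  | 2 => BV.a i
  | _ => BV.b i

/-- Target of the switch of kind `κ` at level `i`. -/
def dst (n κ i : ℕ) : BV :=
  match κ with
  | 0 => BV.b i
  | 1 => aN n (i + 1)
  | 2 => BV.t
  | 3 => bN n (i + 1)
  | _ => aN n (i + 1)

/-- The kind of an abstract choice. -/
def kd : Ch → ℕ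
  | Ch.E => 0
  | Ch.S => 1
  | Ch.B => 2

/-- `π` is represented by the abstract policy `(t, c, f)`. -/
structure PRep (n : ℕ) (π : BV → BV) (t : ℕ) (c : ℕ → Ch) (f : ℕ → Bool) : Prop where
  t1 : 1 ≤ t
  t2 : t ≤ n
  ht : π BV.t = BV.a t
  ha : ∀ i, 1 ≤ i → i ≤ n → π (BV.a i) = dst n (kd (c i)) i
  hb : ∀ i, 1 ≤ i → i ≤ n → π (BV.b i) = dst n (if f i then 3 else 4) i
  hd : π BV.d = BV.s
  hs : π BV.s = BV.s
  topc : ∀ i, n < i → c i = Ch.S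
  topf : ∀ i, n < i → f i = false

/-- The values of the `a`-vertices, extended by zero. -/
noncomputable def alp (n : ℕ) (π : BV → BV) (i : ℕ) : ℚ := if i ≤ n then BVal n π (BV.a i) else 0

/-- The values of the `b`-vertices, extended by zero. -/
noncomputable def bet (n : ℕ) (π : BV → BV) (i : ℕ) : ℚ := if i ≤ n then BVal n π (BV.b i) else 0

lemma edge_kind {n κ i : ℕ} (h1 : 1 ≤ i) (h2 : i ≤ n) : BEdge n (src κ i) (dst n κ i) := by
  unfold BEdge src dst
  rcases κ with _ | _ | _ | _ | κ
  · exact Or.inr (Or.inl ⟨i, h1, h2, rfl, rfl⟩)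
  · exact Or.inr (Or.inr (Or.inl ⟨i, h1, h2, rfl, rfl⟩))
  · exact Or.inr (Or.inr (Or.inr (Or.inl ⟨i, h1, h2, rfl, rfl⟩)))
  · exact Or.inr (Or.inr (Or.inr (Or.inr (Or.inl ⟨i, h1, h2, rfl, rfl⟩))))
  · exact Or.inr (Or.inr (Or.inr (Or.inr (Or.inr (Or.inl ⟨i, h1, h2, rfl, rfl⟩)))))

lemma val_aN {n : ℕ} {π : BV → BV} {i : ℕ} (h2 : i ≤ n) :
    BVal n π (aN n (i + 1)) = alp n π (i + 1) := by
  unfold aN alp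
  by_cases h : i + 1 = n + 1
  · have : ¬ (i + 1 ≤ n) := by omega
    rw [if_pos h, if_neg this, BVal_s]
  · have : i + 1 ≤ n := by omega
    rw [if_neg h, if_pos this]

lemma val_bN {n : ℕ} {π : BV → BV} (hd : BVal n π BV.d = 0) {i : ℕ} (h2 : i ≤ n) :
    BVal n π (bN n (i + 1)) = bet n π (i + 1) := by
  unfold bN bet
  by_cases h : i + 1 = n + 1
  · have : ¬ (i + 1 ≤ n) := by omega
    rw [if_pos h, if_neg this, hd]
  · have : i + 1 ≤ n := by omega
    rw [if_neg h, if_pos this]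

lemma rB_aN (n i : ℕ) : rB n (BV.a i) (aN n (i + 1)) = 0 := by
  unfold aN; split_ifs <;> simp [rB]

lemma rB_baN (n i : ℕ) : rB n (BV.b i) (aN n (i + 1)) = 0 := by
  unfold aN; split_ifs <;> simp [rB]

lemma rB_bN (n i : ℕ) : rB n (BV.b i) (bN n (i + 1)) = 3 / 4 := by
  unfold bN; split_ifs with h
  · have : i = n := by omega
    simp [rB, this]
  · simp [rB]

lemma NB_kind {n κ i : ℕ} (hκ : κ < 5) : NB n (src κ i) (dst n κ i) = n + 1 + 5 * (i - 1) + κ := by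
  interval_cases κ <;> simp only [src, dst]
  · simp [NB]
  · unfold aN; split_ifs <;> simp [NB] <;> omega
  · simp [NB]; omega
  · unfold bN; split_ifs <;> simp [NB] <;> omega
  · unfold aN; split_ifs <;> simp [NB] <;> omega

lemma val_d {n : ℕ} {π : BV → BV} (hP : IsBPolicy n π) (hW : BWeakUnichain n π) :
    BVal n π BV.d = 0 := by
  have h : π BV.d = BV.s := by
    have := hP BV.d trivial
    simpa [BEdge] using this
  rw [Bellman hP hW BV.d trivial, h, BVal_s]; simp [rB]

lemma z_kind {n : ℕ} {π : BV → BV} (hd : BVal n π BV.d = 0) {κ i : ℕ} (h2 : i ≤ n) (hκ : κ < 5) :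
    zB n π (src κ i) (dst n κ i) = gn (alp n π) (bet n π) (BVal n π BV.t) κ i := by
  have ha : alp n π i = BVal n π (BV.a i) := by simp [alp, h2]
  have hb : bet n π i = BVal n π (BV.b i) := by simp [bet, h2]
  unfold zB
  interval_cases κ <;> simp only [src, dst, gn, ha, hb]
  · simp [rB]
  · rw [rB_aN, val_aN h2]; ring
  · simp only [rB]; ring
  · rw [rB_bN, val_bN hd h2]
  · rw [rB_baN, val_aN h2]; ring

lemma PRep.vals {n : ℕ} {π : BV → BV} {t : ℕ} {c : ℕ → Ch} {f : ℕ → Bool}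
    (R : PRep n π t c f) (hP : IsBPolicy n π) (hW : BWeakUnichain n π) :
    Vals n t c f (alp n π) (bet n π) (BVal n π BV.t) := by
  have hd := val_d hP hW
  have za : ∀ i, 1 ≤ i → i ≤ n → gn (alp n π) (bet n π) (BVal n π BV.t) (kd (c i)) i = 0 := by
    intro i h1 h2
    rw [← z_kind hd h2 (by cases c i <;> simp [kd])]
    have hsrc : src (kd (c i)) i = BV.a i := by cases c i <;> rfl
    have := Bellman hP hW (BV.a i) ⟨h1, h2⟩
    rw [R.ha i h1 h2] at this
    rw [hsrc]; unfold zB; linarith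
  have zb : ∀ i, 1 ≤ i → i ≤ n →
      gn (alp n π) (bet n π) (BVal n π BV.t) (if f i then 3 else 4) i = 0 := by
    intro i h1 h2
    rw [← z_kind hd h2 (by split_ifs <;> norm_num)]
    have hsrc : src (if f i then 3 else 4) i = BV.b i := by split_ifs <;> rfl
    have := Bellman hP hW (BV.b i) ⟨h1, h2⟩
    rw [R.hb i h1 h2] at this
    rw [hsrc]; unfold zB; linarith
  have topa : ∀ i, n < i → alp n π i = 0 := fun i hi => by simp [alp, hi]
  have topb : ∀ i, n < i → bet n π i = 0 := fun i hi => by simp [bet, hi]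
  refine ⟨?_, ?_, ?_, ?_, ?_, ?_, R.topc, R.topf, topa, topb⟩
  · intro i h1 hc
    by_cases hi : i ≤ n
    · have := za i h1 hi
      rw [hc] at this; simp only [kd, gn] at this; linarith
    · have := R.topc i (by omega)
      simp [this] at hc
  · intro i h1 hc
    by_cases hi : i ≤ n
    · have := za i h1 hi
      rw [hc] at this; simp only [kd, gn] at this; linarith
    · rw [topa i (by omega), topa (i + 1) (by omega)]
  · intro i h1 hc
    by_cases hi : i ≤ n
    · have := za i h1 hi
      rw [hc] at this; simp only [kd, gn] at this; linarith
    · have := R.topc i (by omega)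
      simp [this] at hc
  · intro i h1 hc
    by_cases hi : i ≤ n
    · have := zb i h1 hi
      simp only [hc, if_true, gn] at this; linarith
    · have := R.topf i (by omega)
      simp [this] at hc
  · intro i h1 hc
    by_cases hi : i ≤ n
    · have := zb i h1 hi
      simp [hc, gn] at this; linarith
    · rw [topb i (by omega), topa (i + 1) (by omega)]
  · rw [Bellman hP hW BV.t trivial, R.ht]
    simp [rB, alp, R.t2]

lemma z_travel {n : ℕ} {π : BV → BV} {j : ℕ} (h2 : j ≤ n) :
    zB n π BV.t (BV.a j) = alp n π j - BVal n π BV.t := by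
  simp [zB, rB, alp, h2]

lemma edge_travel {n j : ℕ} (h1 : 1 ≤ j) (h2 : j ≤ n) : BEdge n BV.t (BV.a j) :=
  Or.inl ⟨j, h1, h2, rfl, rfl⟩

/-- The Bland choice of a level switch, in abstract terms. -/
lemma LC_of {n : ℕ} {π : BV → BV} (hd : BVal n π BV.d = 0) {κ i : ℕ} (h1 : 1 ≤ i) (h2 : i ≤ n)
    (hκ : κ < 5) (himp : BImproving n π (src κ i) (dst n κ i))
    (hmin : ∀ u v, BImproving n π u v → NB n (src κ i) (dst n κ i) ≤ NB n u v) :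
    LC n (alp n π) (bet n π) (BVal n π BV.t) κ i := by
  rw [NB_kind hκ] at hmin
  refine ⟨h1, h2, hκ, ?_, ?_, ?_, ?_⟩
  · intro j hj1 hj2
    by_contra h
    have := hmin BV.t (BV.a j) ⟨edge_travel hj1 hj2, by rw [z_travel hj2]; linarith⟩
    simp only [NB] at this
    omega
  · intro i' a b κ' hκ'
    by_contra h
    have := hmin (src κ' i') (dst n κ' i') ⟨edge_kind a (by omega), by
      rw [z_kind hd (by omega) hκ']; linarith⟩
    rw [NB_kind hκ'] at this
    omega
  · intro κ' hκ'
    by_contra h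
    have := hmin (src κ' i) (dst n κ' i) ⟨edge_kind h1 h2, by
      rw [z_kind hd h2 (by omega)]; linarith⟩
    rw [NB_kind (by omega)] at this
    omega
  · rw [← z_kind hd h2 hκ]; exact himp.2

/-- The Bland choice of a travel switch, in abstract terms. -/
lemma TC_of {n : ℕ} {π : BV → BV} {j : ℕ} (h1 : 1 ≤ j) (h2 : j ≤ n)
    (himp : BImproving n π BV.t (BV.a j))
    (hmin : ∀ u v, BImproving n π u v → NB n BV.t (BV.a j) ≤ NB n u v) :
    TC n (alp n π) (BVal n π BV.t) j := by
  refine ⟨h1, h2, ?_, ?_⟩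
  · intro j' a b
    by_contra h
    have := hmin BV.t (BV.a j') ⟨edge_travel a (by omega), by rw [z_travel (by omega)]; linarith⟩
    simp only [NB] at this
    omega
  · have := himp.2
    rw [z_travel h2] at this; linarith

lemma PRep.updT {n : ℕ} {π : BV → BV} {t : ℕ} {c : ℕ → Ch} {f : ℕ → Bool}
    (R : PRep n π t c f) {j : ℕ} (h1 : 1 ≤ j) (h2 : j ≤ n) :
    PRep n (Function.update π BV.t (BV.a j)) j c f :=
  ⟨h1, h2, by simp, fun i a b => by simpa using R.ha i a b, fun i a b => by simpa using R.hb i a b,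
    by simpa using R.hd, by simpa using R.hs, R.topc, R.topf⟩

lemma PRep.updA {n : ℕ} {π : BV → BV} {t : ℕ} {c : ℕ → Ch} {f : ℕ → Bool}
    (R : PRep n π t c f) {i : ℕ} (h2 : i ≤ n) (x : Ch) :
    PRep n (Function.update π (BV.a i) (dst n (kd x) i)) t (Function.update c i x) f := by
  refine ⟨R.t1, R.t2, by simpa using R.ht, fun k a b => ?_, fun k a b => by simpa using R.hb k a b,
    by simpa using R.hd, by simpa using R.hs, fun k hk => ?_, R.topf⟩
  · by_cases hki : k = i
    · subst hki; simp
    · simpa [Function.update, hki] using R.ha k a b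
  · have hki : k ≠ i := by omega
    simpa [Function.update, hki] using R.topc k hk

lemma PRep.updB {n : ℕ} {π : BV → BV} {t : ℕ} {c : ℕ → Ch} {f : ℕ → Bool}
    (R : PRep n π t c f) {i : ℕ} (h2 : i ≤ n) (x : Bool) :
    PRep n (Function.update π (BV.b i) (dst n (if x then 3 else 4) i)) t c
      (Function.update f i x) := by
  refine ⟨R.t1, R.t2, by simpa using R.ht, fun k a b => by simpa using R.ha k a b, fun k a b => ?_,
    by simpa using R.hd, by simpa using R.hs, R.topc, fun k hk => ?_⟩
  · by_cases hki : k = i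
    · subst hki; simp
    · simpa [Function.update, hki] using R.hb k a b
  · have hki : k ≠ i := by omega
    simpa [Function.update, hki] using R.topf k hk

lemma PRep.updL {n : ℕ} {π : BV → BV} {t : ℕ} {c : ℕ → Ch} {f : ℕ → Bool}
    (R : PRep n π t c f) {κ i : ℕ} (h2 : i ≤ n) (hκ : κ < 5) :
    PRep n (Function.update π (src κ i) (dst n κ i)) t (updC κ c i) (updF κ f i) := by
  interval_cases κ
  · exact R.updA h2 Ch.E
  · exact R.updA h2 Ch.S
  · exact R.updA h2 Ch.B
  · exact R.updB h2 true
  · exact R.updB h2 false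

/-- The invariant of concrete policies. -/
def CInv (n : ℕ) (π : BV → BV) : Prop :=
  IsBPolicy n π ∧ BWeakUnichain n π ∧ ∃ t c f, PRep n π t c f ∧ PInv t c f

/-- Every edge of the process is of one of the known kinds. -/
lemma edge_cases {n : ℕ} {u v : BV} (h : BEdge n u v) :
    (∃ j, 1 ≤ j ∧ j ≤ n ∧ u = BV.t ∧ v = BV.a j) ∨
    (∃ κ i, κ < 5 ∧ 1 ≤ i ∧ i ≤ n ∧ u = src κ i ∧ v = dst n κ i) ∨
    (u = BV.d ∧ v = BV.s) ∨ (u = BV.s ∧ v = BV.s) := by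
  rcases h with h | ⟨i, h1, h2, hu, hv⟩ | ⟨i, h1, h2, hu, hv⟩ | ⟨i, h1, h2, hu, hv⟩ |
    ⟨i, h1, h2, hu, hv⟩ | ⟨i, h1, h2, hu, hv⟩ | h | h
  · exact Or.inl h
  · exact Or.inr (Or.inl ⟨0, i, by norm_num, h1, h2, hu, hv⟩)
  · exact Or.inr (Or.inl ⟨1, i, by norm_num, h1, h2, hu, hv⟩)
  · exact Or.inr (Or.inl ⟨2, i, by norm_num, h1, h2, hu, hv⟩)
  · exact Or.inr (Or.inl ⟨3, i, by norm_num, h1, h2, hu, hv⟩)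
  · exact Or.inr (Or.inl ⟨4, i, by norm_num, h1, h2, hu, hv⟩)
  · exact Or.inr (Or.inr (Or.inl h))
  · exact Or.inr (Or.inr (Or.inr h))

lemma CInv.step {n : ℕ} {π π' : BV → BV} (h : CInv n π) (hs : IsBlandStep n (NB n) π π') :
    CInv n π' := by
  obtain ⟨hP, hW, t, c, f, R, I⟩ := h
  obtain ⟨u, v, himp, hmin, rfl⟩ := hs
  obtain ⟨hP', hW'⟩ := unichain_update hP hW himp
  have hd := val_d hP hW
  have M := absMain (R.vals hP hW) I
  refine ⟨hP', hW', ?_⟩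
  rcases edge_cases himp.1 with ⟨j, h1, h2, rfl, rfl⟩ | ⟨κ, i, hκ, h1, h2, rfl, rfl⟩ |
    ⟨rfl, rfl⟩ | ⟨rfl, rfl⟩
  · exact ⟨j, c, f, R.updT h1 h2, M.1 j (TC_of h1 h2 himp hmin)⟩
  · exact ⟨t, _, _, R.updL h2 hκ, (M.2 κ i (LC_of hd h1 h2 hκ himp hmin)).1⟩
  · have := himp.2
    simp [zB, rB, BVal_s, hd] at this
  · have := himp.2
    simp [zB, rB] at this

lemma CInv.init {n : ℕ} (hn : 1 ≤ n) : CInv n (pi0 n) := by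
  have hP : IsBPolicy n (pi0 n) := by
    intro u hu
    cases u with
    | t => exact edge_travel le_rfl hn
    | s => simp [BEdge, pi0]
    | d => simp [BEdge, pi0]
    | a i => exact edge_kind (κ := 1) hu.1 hu.2
    | b i => exact edge_kind (κ := 4) hu.1 hu.2
  have ra : ∀ d i, i + d = n + 1 → ∃ k, (pi0 n)^[k] (aN n i) = BV.s := by
    intro d
    induction d with
    | zero => intro i hi; exact ⟨0, by simp at hi; simp [aN, hi]⟩
    | succ d ih =>
      intro i hi
      obtain ⟨k, hk⟩ := ih (i + 1) (by omega)
      refine ⟨k + 1, ?_⟩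
      have : i ≠ n + 1 := by omega
      rw [Function.iterate_succ_apply]
      simpa [aN, this, pi0] using hk
  have ra' : ∀ i, i ≤ n → ∃ k, (pi0 n)^[k] (BV.a i) = BV.s := by
    intro i hi
    have := ra (n + 1 - i) i (by omega)
    have hne : i ≠ n + 1 := by omega
    simpa [aN, hne] using this
  refine ⟨hP, ?_, 1, fun _ => Ch.S, fun _ => false, ?_, ?_⟩
  · intro u hu
    cases u with
    | t =>
      obtain ⟨k, hk⟩ := ra' 1 hn
      exact ⟨k + 1, by rw [Function.iterate_succ_apply]; exact hk⟩
    | s => exact ⟨0, rfl⟩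
    | d => exact ⟨1, rfl⟩
    | a i => exact ra' i hu.2
    | b i =>
      obtain ⟨k, hk⟩ := ra (n - i) (i + 1) (by have := hu.2; omega)
      exact ⟨k + 1, by rw [Function.iterate_succ_apply]; exact hk⟩
  · exact ⟨le_rfl, hn, rfl, fun _ _ _ => rfl, fun _ _ _ => rfl, rfl, rfl, fun _ _ => rfl,
      fun _ _ => rfl⟩
  · exact PInv.I1 rfl rfl (by simp) (fun i _ => by simp [Adj]) (Or.inl rfl)

/-- Along the run of Bland's policy iteration on `𝔅_n` started at `π_0`: whenever the
algorithm applies `skip i` (i.e. `skip i` is improving with the smallest Bland number),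
its reduced costs exceed those of `board i`; whenever it applies `enter i`, its reduced
costs exceed those of both `skip i` and `board i`. -/
theorem stmt7 (n : ℕ) (hn : 1 ≤ n) (i : ℕ) (hi1 : 1 ≤ i) (hin : i ≤ n)
    (π : BV → BV) (hvis : BlandReaches n (NB n) (pi0 n) π) :
    (BImproving n π (BV.a i) (aN n (i + 1)) →
      (∀ u v, BImproving n π u v → NB n (BV.a i) (aN n (i + 1)) ≤ NB n u v) →
      zB n π (BV.a i) BV.t < zB n π (BV.a i) (aN n (i + 1))) ∧
    (BImproving n π (BV.a i) (BV.b i) →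
      (∀ u v, BImproving n π u v → NB n (BV.a i) (BV.b i) ≤ NB n u v) →
      zB n π (BV.a i) (aN n (i + 1)) < zB n π (BV.a i) (BV.b i) ∧
      zB n π (BV.a i) BV.t < zB n π (BV.a i) (BV.b i)) := by
  have hC : CInv n π := by
    induction hvis with
    | refl => exact CInv.init hn
    | tail _ hs ih => exact ih.step hs
  obtain ⟨hP, hW, t, c, f, R, I⟩ := hC
  have hd := val_d hP hW
  have M := (absMain (R.vals hP hW) I).2
  have ha : alp n π i = BVal n π (BV.a i) := by simp [alp, hin]
  have z0 : zB n π (BV.a i) (BV.b i) = _ := z_kind (κ := 0) hd hin (by norm_num)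
  have z1 : zB n π (BV.a i) (aN n (i + 1)) = _ := z_kind (κ := 1) hd hin (by norm_num)
  have z2 : zB n π (BV.a i) BV.t = _ := z_kind (κ := 2) hd hin (by norm_num)
  rw [z0, z1, z2]
  simp only [gn]
  constructor
  · intro himp hmin
    have := (M 1 i (LC_of hd hi1 hin (by norm_num) himp hmin)).2.1 rfl
    linarith
  · intro himp hmin
    have := (M 0 i (LC_of hd hi1 hin (by norm_num) himp hmin)).2.2 rfl
    constructor <;> linarith
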